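/- There is no semisimple tensor category C containing pairwise non-isomorphic Fibonacci objects a, b, c satisfying b⊗c ≅ c⊗b, a⊗b⊗a ≅ b⊗a⊗b, a⊗c⊗a ≅ c⊗a⊗c, for which there exists n ≥ 1 such that A_n ≅ B_n and every cyclic word in a, b, c of length at most n is simple. -/

import Mathlib

/-!
The argument takes place in the semiring `IsoClass C` of isomorphism classes of objects under `⊞`
and `⊗`, where the hypotheses read `a² = 1 + a`, `b² = 1 + b`, `c² = 1 + c`, `bc = cb`,
`aba = bab`, `aca = cac`: these are the relations of a Hecke algebra of the Coxeter group of type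
`A₃` with diagram `b — a — c`.

* For `n ≥ 6` the word `cabcab` is not reduced and decomposes as `abca + abcab` (`word_six`),
  contradicting the simplicity of the cyclic word `C₆`.
* For `n = 1`, `2` the relation `A_n = B_n` gives `a = b`, respectively `a = c`.
* For `n = 3`, `5` it implies `ac = ca` (`commute_of_word_three`, `commute_of_word_five`), and then
  `aca = cac` forces `a = c` (`eq_of_commute_of_braid`).
* For `n = 4` it implies `cab = a + ca` (`word_four`), contradicting the simplicity of `C₃`.

These computations need additive cancellation in `IsoClass C`, and for `n = 3` also that `3x = 3y`
implies `x = y`; multiplicative cancellation of `a`, `b`, `c` then follows from `a² = 1 + a`.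
As neither kernels nor splittings of idempotents are assumed in `C`, Schur's lemma and the usual
Krull–Schmidt argument are not available, and `nonempty_iso_of_three_biprod` is deduced from the
finite dimension of the `Hom` spaces instead. If `X` and `Y` are retracts of `G`, all trace
functions on `End G` agree on the idempotents of `X` and `Y` as soon as `3X ⊕ Z ≅ G ≅ 3Y ⊕ Z`;
since `End G` modulo its radical is a product of matrix algebras over `ℂ`, the two idempotents are
then equivalent (`exists_isUnit_of_trace_eq`).
-/

open CategoryTheory CategoryTheory.Limits CategoryTheory.MonoidalCategory

universe v u

attribute [local instance] CategoryTheory.Limits.hasBinaryBiproducts_of_finite_biproducts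

/-- Every object decomposes as a finite biproduct of simple objects. -/
def IsSemisimple (C : Type u) [Category.{v} C] [Preadditive C]
    [HasFiniteBiproducts C] : Prop :=
  ∀ X : C, ∃ (n : ℕ) (f : Fin n → C), (∀ i, Simple (f i)) ∧ Nonempty (X ≅ ⨁ f)

/-- Finitely many isomorphism classes of simple objects. -/
def FiniteRank (C : Type u) [Category.{v} C] [Preadditive C] : Prop :=
  ∃ (n : ℕ) (S : Fin n → C), ∀ X : C, Simple X → ∃ i, Nonempty (X ≅ S i)

/-- A Fibonacci object: simple, self-dual, with `τ ⊗ τ ≅ 𝟙 ⊞ τ`. -/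
def IsFibonacci {C : Type u} [Category.{v} C] [MonoidalCategory C] [Preadditive C]
    [HasFiniteBiproducts C] [RigidCategory C] (τ : C) : Prop :=
  Simple τ ∧ Nonempty (τ ≅ τᘁ) ∧ Nonempty (τ ⊗ τ ≅ 𝟙_ C ⊞ τ)

/-- The cyclic word of length `n` starting at `a` and following the cycle
`a → b → c → a`; `cyclicWord 0 a b c` is the tensor unit. -/
def cyclicWord {C : Type u} [Category.{v} C] [MonoidalCategory C] :
    ℕ → C → C → C → C
  | 0, _, _, _ => 𝟙_ C
  | n + 1, a, b, c => a ⊗ cyclicWord n b c a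

/-- All six cyclic words of length `k` in the letters `a, b, c` are simple. -/
def AllCyclicWordsSimple {C : Type u} [Category.{v} C] [MonoidalCategory C]
    [Preadditive C] (a b c : C) (k : ℕ) : Prop :=
  Simple (cyclicWord k a b c) ∧ Simple (cyclicWord k b c a) ∧
    Simple (cyclicWord k c a b) ∧ Simple (cyclicWord k a c b) ∧
    Simple (cyclicWord k b a c) ∧ Simple (cyclicWord k c b a)

/-! ### Idempotents in finite-dimensional algebras -/

/-- Two idempotent endomorphisms of a finite-dimensional space with the same trace have the same
rank, hence are Murray–von Neumann equivalent. -/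
lemma exists_mul_eq_of_trace_eq {V : Type*} [AddCommGroup V] [Module ℂ V]
    [FiniteDimensional ℂ V] {e f : Module.End ℂ V} (he : IsIdempotentElem e)
    (hf : IsIdempotentElem f) (h : LinearMap.trace ℂ V e = LinearMap.trace ℂ V f) :
    ∃ p q : Module.End ℂ V, p * q = e ∧ q * p = f := by
  have he' := (LinearMap.isProj_range_iff_isIdempotentElem e).2 he
  have hf' := (LinearMap.isProj_range_iff_isIdempotentElem f).2 hf
  rw [he'.trace, hf'.trace, Nat.cast_inj] at h
  let φ := LinearEquiv.ofFinrankEq _ _ h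
  refine ⟨(LinearMap.range e).subtype ∘ₗ φ.symm.toLinearMap ∘ₗ f.rangeRestrict,
    (LinearMap.range f).subtype ∘ₗ φ.toLinearMap ∘ₗ e.rangeRestrict, ?_, ?_⟩
  · ext x
    have hx : f.rangeRestrict (φ (e.rangeRestrict x) : V) = φ (e.rangeRestrict x) :=
      Subtype.ext (hf'.map_id _ (φ (e.rangeRestrict x)).2)
    change ((φ.symm (f.rangeRestrict (φ (e.rangeRestrict x) : V)) : LinearMap.range e) : V) = e x
    rw [hx, φ.symm_apply_apply]
    rfl
  · ext x
    have hx : e.rangeRestrict (φ.symm (f.rangeRestrict x) : V) = φ.symm (f.rangeRestrict x) :=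
      Subtype.ext (he'.map_id _ (φ.symm (f.rangeRestrict x)).2)
    change ((φ (e.rangeRestrict (φ.symm (f.rangeRestrict x) : V)) : LinearMap.range f) : V) = f x
    rw [hx, φ.apply_symm_apply]
    rfl

lemma Matrix.exists_mul_eq_of_trace_eq {d : ℕ} {e f : Matrix (Fin d) (Fin d) ℂ}
    (he : IsIdempotentElem e) (hf : IsIdempotentElem f) (h : e.trace = f.trace) :
    ∃ p q : Matrix (Fin d) (Fin d) ℂ, p * q = e ∧ q * p = f := by
  have h' : LinearMap.trace ℂ _ (Matrix.toLinAlgEquiv' e) =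
      LinearMap.trace ℂ _ (Matrix.toLinAlgEquiv' f) := by
    exact (Matrix.trace_toLin'_eq e).trans (h.trans (Matrix.trace_toLin'_eq f).symm)
  obtain ⟨p, q, h1, h2⟩ := _root_.exists_mul_eq_of_trace_eq (he.map Matrix.toLinAlgEquiv')
    (hf.map Matrix.toLinAlgEquiv') h'
  refine ⟨Matrix.toLinAlgEquiv'.symm p, Matrix.toLinAlgEquiv'.symm q, ?_, ?_⟩
  · rw [← map_mul, h1, AlgEquiv.symm_apply_apply]
  · rw [← map_mul, h2, AlgEquiv.symm_apply_apply]

/-- In a finite-dimensional `ℂ`-algebra `E`, idempotents `e`, `f` on which all trace functions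
agree are equivalent modulo the Jacobson radical, since `E / J(E)` is a product of matrix algebras.
As `J(E)` is nilpotent, the lifted products `e p f q e` and `f q e p f` are invertible in the
corners `e E e` and `f E f`; this is stated by completing them to units of `E`. -/
lemma exists_isUnit_of_trace_eq {E : Type*} [Ring E] [Algebra ℂ E] [FiniteDimensional ℂ E]
    {e f : E} (he : IsIdempotentElem e) (hf : IsIdempotentElem f)
    (h : ∀ τ : E →ₗ[ℂ] ℂ, (∀ x y, τ (x * y) = τ (y * x)) → τ e = τ f) :
    ∃ p q : E, IsUnit (1 - e + e * p * f * q * e) ∧ IsUnit (1 - f + f * q * e * p * f) := by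
  have : IsArtinianRing E := IsArtinianRing.of_finite ℂ E
  obtain ⟨n, d, -, ⟨φ⟩⟩ := IsSemisimpleRing.exists_algEquiv_pi_matrix_of_isAlgClosed ℂ
    (E ⧸ Ring.jacobson E)
  let ρ := φ.toAlgHom.comp (Ideal.Quotient.mkₐ ℂ (Ring.jacobson E))
  have hρ : Function.Surjective ρ := φ.surjective.comp (Ideal.Quotient.mkₐ_surjective ℂ _)
  have hunit : ∀ x : E, ρ x = 1 → IsUnit x := by
    intro x hx
    have hx1 : x - 1 ∈ Ring.jacobson E := by
      have : φ (Ideal.Quotient.mk (Ring.jacobson E) (x - 1)) = 0 := by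
        have h0 : ρ (x - 1) = 0 := by rw [map_sub, hx, map_one, sub_self]
        exact h0
      rwa [map_eq_zero_iff _ φ.injective, Ideal.Quotient.eq_zero_iff_mem] at this
    have hnil : IsNilpotent (x - 1) := by
      obtain ⟨k, hk⟩ := IsSemiprimaryRing.isNilpotent (R := E)
      refine ⟨k, ?_⟩
      have := Ideal.pow_mem_pow hx1 k
      rw [hk] at this
      simpa using this
    simpa using hnil.isUnit_one_add
  have key : ∀ i, ∃ p q : Matrix (Fin (d i)) (Fin (d i)) ℂ, p * q = ρ e i ∧ q * p = ρ f i := by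
    intro i
    refine Matrix.exists_mul_eq_of_trace_eq (congrFun (he.map ρ) i) (congrFun (hf.map ρ) i) ?_
    refine h (Matrix.traceLinearMap (Fin (d i)) ℂ ℂ ∘ₗ LinearMap.proj i ∘ₗ ρ.toLinearMap) ?_
    intro x y
    simpa using Matrix.trace_mul_comm (ρ x i) (ρ y i)
  choose p q hpq hqp using key
  obtain ⟨p, rfl⟩ := hρ p
  obtain ⟨q, rfl⟩ := hρ q
  have h1 : ρ p * ρ q = ρ e := funext hpq
  have h2 : ρ q * ρ p = ρ f := funext hqp
  have he' : ρ e * ρ e = ρ e := he.map ρ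
  have hf' : ρ f * ρ f = ρ f := hf.map ρ
  refine ⟨p, q, hunit _ ?_, hunit _ ?_⟩
  · have : ρ e * ρ p * ρ f * ρ q * ρ e = ρ e := by
      rw [← h2]
      calc ρ e * ρ p * (ρ q * ρ p) * ρ q * ρ e = ρ e * (ρ p * ρ q) * (ρ p * ρ q) * ρ e := by
            simp only [mul_assoc]
        _ = ρ e := by simp only [h1, he']
    simp only [map_add, map_sub, map_one, map_mul, this, sub_add_cancel]
  · have : ρ f * ρ q * ρ e * ρ p * ρ f = ρ f := by
      rw [← h1]
      calc ρ f * ρ q * (ρ p * ρ q) * ρ p * ρ f = ρ f * (ρ q * ρ p) * (ρ q * ρ p) * ρ f := by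
            simp only [mul_assoc]
        _ = ρ f := by simp only [h2, hf']
    simp only [map_add, map_sub, map_one, map_mul, this, sub_add_cancel]

/-! ### Cancellation for direct sums -/

section Cancellation

variable {C : Type u} [Category.{v} C]

lemma CategoryTheory.isIso_of_isIso_comp {X Y : C} (P : X ⟶ Y) (Q : Y ⟶ X) [IsIso (P ≫ Q)]
    [IsIso (Q ≫ P)] : IsIso P := by
  have hl : (inv (Q ≫ P) ≫ Q) ≫ P = 𝟙 Y := by rw [Category.assoc, IsIso.inv_hom_id]
  have hr : P ≫ Q ≫ inv (P ≫ Q) = 𝟙 X := by rw [← Category.assoc, IsIso.hom_inv_id]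
  have : inv (Q ≫ P) ≫ Q = Q ≫ inv (P ≫ Q) := by
    calc inv (Q ≫ P) ≫ Q = (inv (Q ≫ P) ≫ Q) ≫ P ≫ Q ≫ inv (P ≫ Q) := by
          rw [hr, Category.comp_id]
      _ = ((inv (Q ≫ P) ≫ Q) ≫ P) ≫ Q ≫ inv (P ≫ Q) := by rw [Category.assoc _ P]
      _ = _ := by rw [hl, Category.id_comp]
  exact ⟨Q ≫ inv (P ≫ Q), hr, this ▸ hl⟩

variable [Preadditive C]

/-- An endomorphism `T` of a retract `X` of `G` is invertible if its extension by the identity of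
the complementary summand is invertible in `End G`. -/
lemma CategoryTheory.isIso_of_isUnit_corner {X G : C} (i : X ⟶ G) (r : G ⟶ X) (hir : i ≫ r = 𝟙 X)
    (T : X ⟶ X) (h : IsUnit (M := End G) (𝟙 G - r ≫ i + r ≫ T ≫ i : G ⟶ G)) : IsIso T := by
  have hir' : ∀ {W : C} (g : X ⟶ W), i ≫ r ≫ g = g := fun g => by
    rw [← Category.assoc, hir, Category.id_comp]
  have hu := (isUnit_iff_isIso _).1 h
  set w : G ⟶ G := 𝟙 G - r ≫ i + r ≫ T ≫ i with hw
  have h1 : i ≫ w = T ≫ i := by simp [hw, hir']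
  have h2 : w ≫ r = r ≫ T := by simp [hw, hir]
  refine ⟨i ≫ inv w ≫ r, ?_, ?_⟩
  · rw [← Category.assoc, ← h1]; simp [hir]
  · rw [Category.assoc, Category.assoc, ← h2]; simp [hir]

variable [Linear ℂ C]

/-- Retracts of an object `G` on whose idempotents all trace functions of `End G` agree are
isomorphic. -/
lemma CategoryTheory.nonempty_iso_of_trace_eq {X Y G : C} [FiniteDimensional ℂ (G ⟶ G)]
    (i : X ⟶ G) (r : G ⟶ X) (hir : i ≫ r = 𝟙 X) (j : Y ⟶ G) (s : G ⟶ Y) (hjs : j ≫ s = 𝟙 Y)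
    (h : ∀ τ : (G ⟶ G) →ₗ[ℂ] ℂ, (∀ x y, τ (x ≫ y) = τ (y ≫ x)) → τ (r ≫ i) = τ (s ≫ j)) :
    Nonempty (X ≅ Y) := by
  have hir' : ∀ {W : C} (g : X ⟶ W), i ≫ r ≫ g = g := fun g => by
    rw [← Category.assoc, hir, Category.id_comp]
  have hjs' : ∀ {W : C} (g : Y ⟶ W), j ≫ s ≫ g = g := fun g => by
    rw [← Category.assoc, hjs, Category.id_comp]
  have : FiniteDimensional ℂ (End G) := ‹_›
  obtain ⟨p, q, h1, h2⟩ := exists_isUnit_of_trace_eq (E := End G) (e := r ≫ i) (f := s ≫ j)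
    (by simp [IsIdempotentElem, End.mul_def, hir']) (by simp [IsIdempotentElem, End.mul_def, hjs'])
    (fun τ hτ => h τ fun x y => hτ y x)
  have e1 := isIso_of_isUnit_corner i r hir ((i ≫ q ≫ s) ≫ (j ≫ p ≫ r)) (by
    refine (congrArg (IsUnit (M := End G)) ?_).mpr h1
    change _ = 𝟙 G - r ≫ i + (r ≫ i) ≫ q ≫ (s ≫ j) ≫ p ≫ r ≫ i
    simp)
  have e2 := isIso_of_isUnit_corner j s hjs ((j ≫ p ≫ r) ≫ (i ≫ q ≫ s)) (by
    refine (congrArg (IsUnit (M := End G)) ?_).mpr h2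
    change _ = 𝟙 G - s ≫ j + (s ≫ j) ≫ p ≫ (r ≫ i) ≫ q ≫ s ≫ j
    simp)
  have := isIso_of_isIso_comp (i ≫ q ≫ s) (j ≫ p ≫ r)
  exact ⟨asIso (i ≫ q ≫ s)⟩

/-- The value of a trace function on the idempotent of a retract depends only on the isomorphism
class of the retract. -/
lemma CategoryTheory.trace_retract_eq {X G : C} (τ : (G ⟶ G) →ₗ[ℂ] ℂ)
    (hτ : ∀ x y, τ (x ≫ y) = τ (y ≫ x)) (i i' : X ⟶ G) (r r' : G ⟶ X)
    (h : i ≫ r = 𝟙 X) (h' : i' ≫ r' = 𝟙 X) : τ (r ≫ i) = τ (r' ≫ i') := by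
  have := hτ (r ≫ i') (r' ≫ i)
  simpa [← Category.assoc _ _ i, ← Category.assoc _ _ i', h, h'] using this

variable [HasBinaryBiproducts C]

/-- Cancellation of a summand together with a multiplicity of three: `3X ⊕ Z ≅ 3Y ⊕ Z` forces
`X ≅ Y`. -/
lemma CategoryTheory.nonempty_iso_of_three_biprod (hfd : ∀ X Y : C, FiniteDimensional ℂ (X ⟶ Y))
    {X Y Z : C} (φ : X ⊞ (X ⊞ (X ⊞ Z)) ≅ Y ⊞ (Y ⊞ (Y ⊞ Z))) : Nonempty (X ≅ Y) := by
  refine nonempty_iso_of_trace_eq biprod.inl biprod.fst (by simp)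
    (biprod.inl ≫ φ.inv) (φ.hom ≫ biprod.fst) (by simp) fun τ hτ => ?_
  -- the sum of the idempotents of the four summands, for an arbitrary `U` with a fourth summand `Z`
  have tot : ∀ U : C, 𝟙 (U ⊞ (U ⊞ (U ⊞ Z))) = biprod.fst ≫ biprod.inl +
      (biprod.snd ≫ biprod.fst) ≫ (biprod.inl ≫ biprod.inr) +
      (biprod.snd ≫ biprod.snd ≫ biprod.fst) ≫ (biprod.inl ≫ biprod.inr ≫ biprod.inr) +
      (biprod.snd ≫ biprod.snd ≫ biprod.snd) ≫ (biprod.inr ≫ biprod.inr ≫ biprod.inr) := by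
    intro U
    ext <;> simp
  have hX := congrArg τ (tot X)
  have hY := congrArg (fun t => τ (φ.hom ≫ t ≫ φ.inv)) (tot Y)
  have t1 := trace_retract_eq τ hτ biprod.inl (biprod.inl ≫ biprod.inr) biprod.fst
    (biprod.snd ≫ biprod.fst) (by simp) (by simp)
  have t2 := trace_retract_eq τ hτ biprod.inl (biprod.inl ≫ biprod.inr ≫ biprod.inr) biprod.fst
    (biprod.snd ≫ biprod.snd ≫ biprod.fst) (by simp) (by simp)
  have s1 := trace_retract_eq τ hτ (biprod.inl ≫ φ.inv) (biprod.inl ≫ biprod.inr ≫ φ.inv)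
    (φ.hom ≫ biprod.fst) (φ.hom ≫ biprod.snd ≫ biprod.fst) (by simp) (by simp)
  have s2 := trace_retract_eq τ hτ (biprod.inl ≫ φ.inv)
    (biprod.inl ≫ biprod.inr ≫ biprod.inr ≫ φ.inv)
    (φ.hom ≫ biprod.fst) (φ.hom ≫ biprod.snd ≫ biprod.snd ≫ biprod.fst) (by simp) (by simp)
  have z := trace_retract_eq τ hτ (biprod.inr ≫ biprod.inr ≫ biprod.inr)
    (biprod.inr ≫ biprod.inr ≫ biprod.inr ≫ φ.inv) (biprod.snd ≫ biprod.snd ≫ biprod.snd)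
    (φ.hom ≫ biprod.snd ≫ biprod.snd ≫ biprod.snd) (by simp) (by simp)
  simp only [Category.assoc, Category.id_comp, Preadditive.comp_add, Preadditive.add_comp,
    Iso.hom_inv_id, map_add] at *
  rw [hX] at hY
  linear_combination (hY + t1 + t2 - s1 - s2 - z) / 3

end Cancellation

/-! ### The semiring of isomorphism classes -/

section IsoClasses

variable (C : Type u) [Category.{v} C]

/-- Isomorphism classes of objects of `C`. Under `⊞` and `⊗` they form a noncommutative semiring,
the positive part of the split Grothendieck ring. -/
def IsoClass : Type u := Quotient (isIsomorphicSetoid C)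

variable {C}

/-- The isomorphism class of an object. -/
def isoClass (X : C) : IsoClass C := Quotient.mk (isIsomorphicSetoid C) X

lemma isoClass_eq_iff {X Y : C} : isoClass X = isoClass Y ↔ Nonempty (X ≅ Y) :=
  Quotient.eq (r := isIsomorphicSetoid C)

lemma isoClass_surjective : Function.Surjective (isoClass (C := C)) := Quotient.mk_surjective

variable [Preadditive C] [HasFiniteBiproducts C]

lemma CategoryTheory.nonempty_map_biprod_iso (F : C ⥤ C) [F.IsLeftAdjoint] (Y Z : C) :
    Nonempty (F.obj (Y ⊞ Z) ≅ F.obj Y ⊞ F.obj Z) :=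
  have : HasZeroObject C := hasZeroObject_of_hasFiniteBiproducts C
  have := preservesBinaryBiproducts_of_preservesBinaryCoproducts F
  ⟨F.mapBiprod Y Z⟩

lemma CategoryTheory.isZero_obj_of_isLeftAdjoint (F : C ⥤ C) [F.IsLeftAdjoint] {Y : C}
    (hY : IsZero Y) : IsZero (F.obj Y) :=
  have : HasZeroObject C := hasZeroObject_of_hasFiniteBiproducts C
  F.map_isZero hY

noncomputable instance : Add (IsoClass C) :=
  ⟨Quotient.map₂ (fun X Y => X ⊞ Y) fun _ _ ⟨f⟩ _ _ ⟨g⟩ => ⟨biprod.mapIso f g⟩⟩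

open scoped ZeroObject in
noncomputable instance : Zero (IsoClass C) :=
  have : HasZeroObject C := hasZeroObject_of_hasFiniteBiproducts C
  ⟨isoClass 0⟩

lemma isoClass_biprod (X Y : C) : isoClass (X ⊞ Y) = isoClass X + isoClass Y := rfl

/-- Simple objects are indecomposable. -/
lemma CategoryTheory.Simple.isoClass_ne_add {S X Y : C} [hS : Simple S] (hX : Simple X)
    (hY : Simple Y) : isoClass S ≠ isoClass X + isoClass Y := by
  intro h
  obtain ⟨f⟩ := isoClass_eq_iff.1 (h.trans (isoClass_biprod X Y).symm)
  exact ((indecomposable_of_simple S).2 X Y f).elim (Simple.not_isZero X) (Simple.not_isZero Y)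

variable [MonoidalCategory C] [RigidCategory C]

-- In a rigid category `X ⊗ -` and `- ⊗ X` are left adjoints, hence additive.
instance (X : C) : (tensorLeft X).IsLeftAdjoint := (tensorLeftAdjunction (ᘁX) X).isLeftAdjoint

instance (X : C) : (tensorRight X).IsLeftAdjoint := (tensorRightAdjunction X (Xᘁ)).isLeftAdjoint

open scoped ZeroObject in
noncomputable instance : Semiring (IsoClass C) :=
  have : HasZeroObject C := hasZeroObject_of_hasFiniteBiproducts C
  { mul := Quotient.map₂ (fun X Y => X ⊗ Y) fun _ _ ⟨f⟩ _ _ ⟨g⟩ => ⟨f ⊗ᵢ g⟩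
    one := isoClass (𝟙_ C)
    add_assoc := by
      rintro ⟨X⟩ ⟨Y⟩ ⟨Z⟩
      exact isoClass_eq_iff.2 ⟨biprod.associator X Y Z⟩
    add_comm := by
      rintro ⟨X⟩ ⟨Y⟩
      exact isoClass_eq_iff.2 ⟨biprod.braiding X Y⟩
    zero_add := by
      rintro ⟨X⟩
      exact isoClass_eq_iff.2 ⟨(isoZeroBiprod (isZero_zero C)).symm⟩
    add_zero := by
      rintro ⟨X⟩
      exact isoClass_eq_iff.2 ⟨(isoBiprodZero (isZero_zero C)).symm⟩
    nsmul := nsmulRec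
    mul_assoc := by
      rintro ⟨X⟩ ⟨Y⟩ ⟨Z⟩
      exact isoClass_eq_iff.2 ⟨α_ X Y Z⟩
    one_mul := by
      rintro ⟨X⟩
      exact isoClass_eq_iff.2 ⟨λ_ X⟩
    mul_one := by
      rintro ⟨X⟩
      exact isoClass_eq_iff.2 ⟨ρ_ X⟩
    zero_mul := by
      rintro ⟨X⟩
      exact isoClass_eq_iff.2
        ⟨(isZero_obj_of_isLeftAdjoint (tensorRight X) (isZero_zero C)).iso (isZero_zero C)⟩
    mul_zero := by
      rintro ⟨X⟩
      exact isoClass_eq_iff.2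
        ⟨(isZero_obj_of_isLeftAdjoint (tensorLeft X) (isZero_zero C)).iso (isZero_zero C)⟩
    left_distrib := by
      rintro ⟨X⟩ ⟨Y⟩ ⟨Z⟩
      exact isoClass_eq_iff.2 (nonempty_map_biprod_iso (tensorLeft X) Y Z)
    right_distrib := by
      rintro ⟨X⟩ ⟨Y⟩ ⟨Z⟩
      exact isoClass_eq_iff.2 (nonempty_map_biprod_iso (tensorRight Z) X Y) }

lemma isoClass_tensor (X Y : C) : isoClass (X ⊗ Y) = isoClass X * isoClass Y := rfl

lemma isoClass_unit : isoClass (𝟙_ C) = 1 := rfl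

/-- In the semiring of isomorphism classes addition is cancellative and `3` is not a
zero divisor. -/
lemma IsoClass.eq_of_three_add [Linear ℂ C] (hfd : ∀ X Y : C, FiniteDimensional ℂ (X ⟶ Y))
    (x y z : IsoClass C) (h : x + x + x + z = y + y + y + z) : x = y := by
  obtain ⟨X, rfl⟩ := isoClass_surjective x
  obtain ⟨Y, rfl⟩ := isoClass_surjective y
  obtain ⟨Z, rfl⟩ := isoClass_surjective z
  simp only [add_assoc] at h
  simp only [← isoClass_biprod] at h
  obtain ⟨φ⟩ := isoClass_eq_iff.1 h
  exact isoClass_eq_iff.2 (nonempty_iso_of_three_biprod hfd φ)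

end IsoClasses

/-! ### Computations with the relations -/

section Relations

variable {K : Type*} [Semiring K]

lemma mul_right_cancel_of_mul_self [IsCancelAdd K] {a x y : K} (ha : a * a = 1 + a)
    (h : x * a = y * a) : x = y := by
  have h' : x * (a * a) = y * (a * a) := by rw [← mul_assoc, h, mul_assoc]
  rw [ha, mul_add, mul_add, mul_one, mul_one, h] at h'
  exact add_right_cancel h'

lemma mul_left_cancel_of_mul_self [IsCancelAdd K] {a x y : K} (ha : a * a = 1 + a)
    (h : a * x = a * y) : x = y := by
  have h' : a * a * x = a * a * y := by rw [mul_assoc, h, ← mul_assoc]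
  rw [ha, add_mul, add_mul, one_mul, one_mul, h] at h'
  exact add_right_cancel h'

/-- Commuting generators satisfying the braid relation coincide. -/
lemma eq_of_commute_of_braid [IsCancelAdd K] {a c : K} (ha : a * a = 1 + a) (hc : c * c = 1 + c)
    (h : a * c = c * a) (hac : a * c * a = c * a * c) : a = c := by
  have h1 : a * c * a = c + a * c := by rw [mul_assoc, ← h, ← mul_assoc, ha, add_mul, one_mul]
  have h2 : c * a * c = a + a * c := by
    rw [mul_assoc, h, ← mul_assoc, hc, add_mul, one_mul]
  rw [h1, h2] at hac
  exact (add_right_cancel hac).symm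

variable {a b c : K}

/-- The case `n = 3`: here `z = bc` is central, and evaluating `abaca` and `acaba` with the two
braid relations gives `b + ba = c + ac` and `c + ca = b + ab`. Multiplying the first by `a` on the
left and the second by `a` on the right, `3ca = 3ac` follows. -/
lemma commute_of_word_three [IsCancelAdd K]
    (hcan : ∀ x y z : K, x + x + x + z = y + y + y + z → x = y)
    (ha : a * a = 1 + a) (hb : b * b = 1 + b) (hc : c * c = 1 + c)
    (hbc : b * c = c * b) (hab : a * b * a = b * a * b) (hac : a * c * a = c * a * c)
    (h : a * (b * c) = b * (c * a)) : a * c = c * a := by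
  have zc : ∀ {x y : K}, b * c * x = b * c * y → x = y := fun {x y} hxy =>
    mul_left_cancel_of_mul_self hc (mul_left_cancel_of_mul_self hb (by simpa [mul_assoc] using hxy))
  have za : a * (b * c) = b * c * a := by rw [h, mul_assoc]
  have zb : b * (b * c) = b * c * b := by rw [mul_assoc b c b, hbc]
  have zc' : c * (b * c) = b * c * c := by rw [← mul_assoc, hbc]
  have e1 : b + b * a = c + a * c := zc <| by
    calc b * c * (b + b * a) = b * c * (b * (a * a)) := by rw [ha, mul_add _ 1 a, mul_one]
      _ = (b * c * b) * (a * a) := by simp only [mul_assoc]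
      _ = b * (b * c * a) * a := by rw [← zb]; simp only [mul_assoc]
      _ = b * a * b * (c * a) := by rw [← za]; simp only [mul_assoc]
      _ = a * b * (a * c * a) := by rw [← hab]; simp only [mul_assoc]
      _ = a * (b * c) * (a * c) := by rw [hac]; simp only [mul_assoc]
      _ = b * c * (a * a * c) := by rw [za]; simp only [mul_assoc]
      _ = b * c * (c + a * c) := by rw [ha, add_mul, one_mul]
  have e2 : c + c * a = b + a * b := zc <| by
    calc b * c * (c + c * a) = b * c * (c * (a * a)) := by rw [ha, mul_add _ 1 a, mul_one]
      _ = (b * c * c) * (a * a) := by simp only [mul_assoc]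
      _ = c * (b * c * a) * a := by rw [← zc']; simp only [mul_assoc]
      _ = c * a * (b * c) * a := by rw [← za]; simp only [mul_assoc]
      _ = c * a * c * (b * a) := by rw [hbc]; simp only [mul_assoc]
      _ = a * c * (a * b * a) := by rw [← hac]; simp only [mul_assoc]
      _ = a * (c * b) * (a * b) := by rw [hab]; simp only [mul_assoc]
      _ = b * c * (a * a * b) := by rw [← hbc, za]; simp only [mul_assoc]
      _ = b * c * (b + a * b) := by rw [ha, add_mul, one_mul]
  have f1 : a * b + a * b * a = a * c + (c + a * c) := by
    have := congrArg (a * ·) e1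
    simpa only [mul_add, ← mul_assoc, ha, add_mul, one_mul] using this
  have f2 : c * a + (c + c * a) = b * a + a * b * a := by
    have := congrArg (· * a) e2
    simpa only [add_mul, mul_assoc, ha, mul_add, mul_one] using this
  refine (hcan (c * a) (a * c) (c + c + a * b * a) ?_).symm
  calc c * a + c * a + c * a + (c + c + a * b * a)
      = (c + c * a) + (c * a + (c + c * a)) + a * b * a := by abel
    _ = (b + b * a) + (a * b + a * b * a) + a * b * a := by rw [f2, e2]; abel
    _ = a * c + a * c + a * c + (c + c + a * b * a) := by rw [e1, f1]; abel

/-- `abcab = acaba = cacba`. -/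
lemma word_five (hbc : b * c = c * b) (hab : a * b * a = b * a * b) (hac : a * c * a = c * a * c) :
    a * (b * (c * (a * b))) = c * (a * (c * (b * a))) := by
  calc a * (b * (c * (a * b))) = a * (b * c) * (a * b) := by simp only [mul_assoc]
    _ = a * c * (b * a * b) := by rw [hbc]; simp only [mul_assoc]
    _ = a * c * a * (b * a) := by rw [← hab]; simp only [mul_assoc]
    _ = c * (a * (c * (b * a))) := by rw [hac]; simp only [mul_assoc]

/-- The case `n = 4`: the relations give `c · abca = abca · b`, and `abca = bcab` turns this into
`bab = bca`. -/
lemma word_four [IsCancelAdd K] (hb : b * b = 1 + b) (hc : c * c = 1 + c)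
    (hbc : b * c = c * b) (hab : a * b * a = b * a * b) (hac : a * c * a = c * a * c)
    (h : a * (b * (c * a)) = b * (c * (a * b))) : c * (a * b) = a + c * a := by
  have h1 : c * (a * (b * (c * a))) = a * (b * (c * a)) * b := by
    calc c * (a * (b * (c * a))) = c * (a * (b * c * a)) := by simp only [mul_assoc]
      _ = c * (a * (c * (b * a))) := by rw [hbc]; simp only [mul_assoc]
      _ = a * (b * (c * a)) * b := by rw [← word_five hbc hab hac]; simp only [mul_assoc]
  rw [h] at h1
  have h2 : c * (b * (c * (a * b))) = b * (a * b) + b * (c * (a * b)) := by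
    calc c * (b * (c * (a * b))) = c * b * (c * (a * b)) := by simp only [mul_assoc]
      _ = b * (c * c * (a * b)) := by rw [← hbc]; simp only [mul_assoc]
      _ = _ := by rw [hc]; simp only [add_mul, one_mul, mul_add, mul_assoc]
  have h3 : b * (c * (a * b)) * b = b * (c * a) + b * (c * (a * b)) := by
    simp only [mul_assoc, hb, mul_add, mul_one]
  rw [h2, h3] at h1
  rw [mul_left_cancel_of_mul_self hb (add_right_cancel h1), ← mul_assoc, hc, add_mul, one_mul]

/-- The case `n = 5`: left multiplication by `c` turns `abcab = bcabc` into `acba = babc`, that is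
`abca = abac`. -/
lemma commute_of_word_five [IsCancelAdd K] (ha : a * a = 1 + a) (hb : b * b = 1 + b)
    (hc : c * c = 1 + c)
    (hbc : b * c = c * b) (hab : a * b * a = b * a * b) (hac : a * c * a = c * a * c)
    (h : a * (b * (c * (a * b))) = b * (c * (a * (b * c)))) : a * c = c * a := by
  have h1 : c * (a * (b * (c * (a * b)))) = a * (b * (c * a)) + a * (b * (c * (a * b))) := by
    calc c * (a * (b * (c * (a * b)))) = c * c * (a * (c * (b * a))) := by
          rw [word_five hbc hab hac]; simp only [mul_assoc]
      _ = a * (c * b * a) + c * (a * (c * (b * a))) := by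
          rw [hc]; simp only [add_mul, one_mul, mul_assoc]
      _ = _ := by rw [word_five hbc hab hac, ← hbc]; simp only [mul_assoc]
  have h2 : c * (b * (c * (a * (b * c)))) = a * (b * (a * c)) + b * (c * (a * (b * c))) := by
    calc c * (b * (c * (a * (b * c)))) = c * b * (c * (a * (b * c))) := by simp only [mul_assoc]
      _ = b * (c * c * (a * (b * c))) := by rw [← hbc]; simp only [mul_assoc]
      _ = b * a * b * c + b * (c * (a * (b * c))) := by
          rw [hc]; simp only [add_mul, one_mul, mul_add, mul_assoc]
      _ = _ := by rw [← hab]; simp only [mul_assoc]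
  rw [h] at h1
  rw [h1] at h2
  exact (mul_left_cancel_of_mul_self hb (mul_left_cancel_of_mul_self ha (add_right_cancel h2))).symm

/-- The case `n ≥ 6`: the word `cabcab` is not reduced. -/
lemma word_six (ha : a * a = 1 + a)
    (hbc : b * c = c * b) (hab : a * b * a = b * a * b) (hac : a * c * a = c * a * c) :
    c * (a * (b * (c * (a * b)))) = a * (b * (c * a)) + a * (b * (c * (a * b))) := by
  calc c * (a * (b * (c * (a * b)))) = c * (a * (b * c * (a * b))) := by simp only [mul_assoc]
    _ = c * a * c * (b * a * b) := by rw [hbc]; simp only [mul_assoc]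
    _ = a * c * (a * a) * (b * a) := by rw [← hac, ← hab]; simp only [mul_assoc]
    _ = a * (c * b) * a + a * c * a * (b * a) := by
        rw [ha]; simp only [mul_add, add_mul, mul_one, mul_assoc]
    _ = a * (b * (c * a)) + a * (b * (c * (a * b))) := by
        rw [hac, word_five hbc hab hac, ← hbc]; simp only [mul_assoc]

end Relations

/-! ### Exclusion of each length -/

/-- Case 3: only `b` and `c` commute. -/
theorem no_quotient_bc_commute (C : Type u) [Category.{v} C] [MonoidalCategory C]
    [Preadditive C] [Linear ℂ C] [HasFiniteBiproducts C] [RigidCategory C]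
    [Simple (𝟙_ C)]
    (hfd : ∀ X Y : C, FiniteDimensional ℂ (X ⟶ Y))
    (hss : IsSemisimple C)
    (a b c : C) (ha : IsFibonacci a) (hb : IsFibonacci b) (hc : IsFibonacci c)
    (hab : ¬ Nonempty (a ≅ b)) (hbc : ¬ Nonempty (b ≅ c)) (hac : ¬ Nonempty (a ≅ c))
    (hrel₂ : Nonempty (b ⊗ c ≅ c ⊗ b))
    (hrel₁ : Nonempty (a ⊗ b ⊗ a ≅ b ⊗ a ⊗ b))
    (hrel₃ : Nonempty (a ⊗ c ⊗ a ≅ c ⊗ a ⊗ c))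
    (hn : ∃ n : ℕ, 1 ≤ n ∧
      Nonempty (cyclicWord n a b c ≅ cyclicWord n b c a) ∧
      ∀ k : ℕ, 1 ≤ k → k ≤ n → AllCyclicWordsSimple a b c k) :
    False := by
  have hcan := IsoClass.eq_of_three_add (C := C) hfd
  have hK : ∀ x y z : IsoClass C, x + z = y + z → x = y := fun x y z h =>
    hcan x y (z + z + z) (by
      rw [show x + x + x + (z + z + z) = (x + z) + (x + z) + (x + z) by abel, h]; abel)
  have : IsCancelAdd (IsoClass C) :=
    { add_left_cancel := fun z x y h => hK x y z (by simpa only [add_comm] using h)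
      add_right_cancel := fun z x y h => hK x y z h }
  have qa : isoClass a * isoClass a = 1 + isoClass a := isoClass_eq_iff.2 ha.2.2
  have qb : isoClass b * isoClass b = 1 + isoClass b := isoClass_eq_iff.2 hb.2.2
  have qc : isoClass c * isoClass c = 1 + isoClass c := isoClass_eq_iff.2 hc.2.2
  have rbc : isoClass b * isoClass c = isoClass c * isoClass b := isoClass_eq_iff.2 hrel₂
  have rab : isoClass a * isoClass b * isoClass a = isoClass b * isoClass a * isoClass b := by
    rw [mul_assoc, mul_assoc]; exact isoClass_eq_iff.2 hrel₁
  have rac : isoClass a * isoClass c * isoClass a = isoClass c * isoClass a * isoClass c := by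
    rw [mul_assoc, mul_assoc]; exact isoClass_eq_iff.2 hrel₃
  have hac' : isoClass a ≠ isoClass c := fun h => hac (isoClass_eq_iff.1 h)
  have hcomm : isoClass a * isoClass c ≠ isoClass c * isoClass a := fun h =>
    hac' (eq_of_commute_of_braid qa qc h rac)
  obtain ⟨n, hn1, hAB, hsimple⟩ := hn
  replace hAB := isoClass_eq_iff.2 hAB
  obtain rfl | rfl | rfl | rfl | rfl | h6 : n = 1 ∨ n = 2 ∨ n = 3 ∨ n = 4 ∨ n = 5 ∨ 6 ≤ n := by
    lia
  · simp only [cyclicWord, isoClass_tensor, isoClass_unit, mul_one] at hAB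
    exact hab (isoClass_eq_iff.1 hAB)
  · simp only [cyclicWord, isoClass_tensor, isoClass_unit, mul_one] at hAB
    exact hac' (mul_right_cancel_of_mul_self qb (hAB.trans rbc))
  · simp only [cyclicWord, isoClass_tensor, isoClass_unit, mul_one] at hAB
    exact hcomm (commute_of_word_three hcan qa qb qc rbc rab rac hAB)
  · simp only [cyclicWord, isoClass_tensor, isoClass_unit, mul_one] at hAB
    have : Simple (cyclicWord 3 c a b) := (hsimple 3 (by lia) (by lia)).2.2.1
    refine this.isoClass_ne_add ha.1 (hsimple 2 (by lia) (by lia)).2.2.1 ?_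
    simpa only [cyclicWord, isoClass_tensor, isoClass_unit, mul_one] using
      word_four qb qc rbc rab rac hAB
  · simp only [cyclicWord, isoClass_tensor, isoClass_unit, mul_one] at hAB
    exact hcomm (commute_of_word_five qa qb qc rbc rab rac hAB)
  · have : Simple (cyclicWord 6 c a b) := (hsimple 6 (by lia) h6).2.2.1
    refine this.isoClass_ne_add (hsimple 4 (by lia) (by lia)).1 (hsimple 5 (by lia) (by lia)).1 ?_
    simpa only [cyclicWord, isoClass_tensor, isoClass_unit, mul_one] using
      word_six qa rbc rab rac
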